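/- Lower bound of the smoothed max-relative entropy by the Petz–Rényi divergence: For all states ρ, σ on ℂ^d, all ε ∈ (0,1) and all α ∈ [0,1), D_max^ε(ρ‖σ) ≥ D_α(ρ‖σ) + (2/(α−1)) log(1/(1−ε)) in the extended reals. -/

import Mathlib

open scoped Kronecker ComplexOrder

noncomputable section

namespace QCD

attribute [local instance] Classical.propDecidable

variable {n m : Type} [Fintype n] [DecidableEq n] [Fintype m] [DecidableEq m]

/-- The real part of the trace of a complex matrix. -/
def rtr (A : Matrix n n ℂ) : ℝ := (A.trace).re

/-- A quantum state: positive semidefinite with trace one. -/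
def IsState (ρ : Matrix n n ℂ) : Prop := ρ.PosSemidef ∧ ρ.trace = 1

/-- Loewner order: `A ≤ B` iff `B - A` is positive semidefinite. -/
def loewnerLE (A B : Matrix n n ℂ) : Prop := (B - A).PosSemidef

/-- Support containment (for PSD matrices): `ker σ ⊆ ker ρ`. -/
def SuppLE (ρ σ : Matrix n n ℂ) : Prop := ∀ v : n → ℂ, σ.mulVec v = 0 → ρ.mulVec v = 0

/-- Functional calculus for Hermitian matrices (junk value `0` otherwise). -/
def matFun (f : ℝ → ℝ) (A : Matrix n n ℂ) : Matrix n n ℂ :=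
  if hA : A.IsHermitian then
    (hA.eigenvectorUnitary : Matrix n n ℂ) *
      Matrix.diagonal (fun i => (f (hA.eigenvalues i) : ℂ)) *
      (star (hA.eigenvectorUnitary : Matrix n n ℂ))
  else 0

/-- Matrix square root via functional calculus. -/
def msqrt (A : Matrix n n ℂ) : Matrix n n ℂ := matFun Real.sqrt A

/-- Matrix real power taken on the support (`0 ^ t := 0`). -/
def mpow (A : Matrix n n ℂ) (t : ℝ) : Matrix n n ℂ :=
  matFun (fun x => if x = 0 then 0 else x ^ t) A

/-- Matrix base-2 logarithm on the support. -/
def mlog (A : Matrix n n ℂ) : Matrix n n ℂ := matFun (Real.logb 2) A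

/-- Positive part of a Hermitian matrix. -/
def mposPart (A : Matrix n n ℂ) : Matrix n n ℂ := matFun (fun x => max x 0) A

/-- Trace norm. -/
def traceNorm (A : Matrix n m ℂ) : ℝ := rtr (msqrt (A.conjTranspose * A))

/-- Base-2 logarithm as an extended real (`⊥` on nonpositive input). -/
def elog (x : ℝ) : EReal := if x ≤ 0 then ⊥ else ((Real.logb 2 x : ℝ) : EReal)

/-- Base-2 logarithm of an extended real. -/
def elogE (x : EReal) : EReal := if x = ⊤ then ⊤ else elog x.toReal

/-- `2 ^ x` for an extended real `x`. -/
def epow2 (x : EReal) : EReal :=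
  if x = ⊤ then ⊤ else if x = ⊥ then 0 else ((((2:ℝ) ^ x.toReal : ℝ)) : EReal)

/-- Umegaki relative entropy (base 2), `⊤` if the support condition fails. -/
def relEntropy (ρ σ : Matrix n n ℂ) : EReal :=
  if SuppLE ρ σ then ((rtr (ρ * (mlog ρ - mlog σ)) : ℝ) : EReal) else ⊤

/-- Petz–Rényi divergence (base 2). -/
def petzRenyi (α : ℝ) (ρ σ : Matrix n n ℂ) : EReal :=
  if 1 < α ∧ ¬ SuppLE ρ σ then ⊤
  else (((α - 1)⁻¹ : ℝ) : EReal) * elog (rtr (mpow ρ α * mpow σ (1 - α)))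

/-- Geometric (maximal) Rényi divergence (base 2). -/
def geomRenyi (α : ℝ) (ρ σ : Matrix n n ℂ) : EReal :=
  if SuppLE ρ σ then
    (((α - 1)⁻¹ : ℝ) : EReal) *
      elog (rtr (σ * mpow (mpow σ (-(1/2 : ℝ)) * ρ * mpow σ (-(1/2 : ℝ))) α))
  else ⊤

/-- Max-relative entropy (base 2). -/
def dMax (ρ σ : Matrix n n ℂ) : EReal :=
  sInf {x : EReal | ∃ lam : ℝ, x = (lam : EReal) ∧ loewnerLE ρ ((((2:ℝ) ^ lam : ℝ) : ℂ) • σ)}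

/-- Uhlmann fidelity. -/
def fidelity (ρ σ : Matrix n n ℂ) : ℝ := (rtr (msqrt (msqrt σ * ρ * msqrt σ))) ^ 2

/-- Sine (purified) distance. -/
def sineDist (ρ σ : Matrix n n ℂ) : ℝ := Real.sqrt (1 - fidelity ρ σ)

/-- Smoothed max-relative entropy: smoothing over states in the sine-distance ball. -/
def dMaxSmooth (δ : ℝ) (ρ σ : Matrix n n ℂ) : EReal :=
  ⨅ (ρ' : Matrix n n ℂ) (_ : IsState ρ' ∧ sineDist ρ ρ' ≤ δ), dMax ρ' σ

/-- Hypothesis testing divergence (base 2). -/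
def dH (ε : ℝ) (ρ σ : Matrix n n ℂ) : EReal :=
  - elog (sInf {x : ℝ | ∃ T : Matrix n n ℂ,
      T.PosSemidef ∧ ((1 : Matrix n n ℂ) - T).PosSemidef ∧ 1 - ε ≤ rtr (T * ρ) ∧ x = rtr (T * σ)})

/-- The quantity `c_γ(ρ‖σ)`. -/
def cGamma (γ : ℝ) (ρ σ : Matrix n n ℂ) : EReal :=
  ((γ⁻¹ : ℝ) : EReal) *
    elogE (epow2 ((γ : ℝ) * petzRenyi (1 + γ) ρ σ) +
           epow2 (((-γ : ℝ) : EReal) * petzRenyi (1 - γ) ρ σ) + 1)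

/-- Binary entropy (base 2). -/
def binEnt (x : ℝ) : ℝ := -(x * Real.logb 2 x) - (1 - x) * Real.logb 2 (1 - x)

/-- Action of `id_k ⊗ Φ` on block matrices. -/
def blockApply {k : Type} (Φ : Matrix n n ℂ →ₗ[ℂ] Matrix m m ℂ)
    (M : Matrix (k × n) (k × n) ℂ) : Matrix (k × m) (k × m) ℂ :=
  Matrix.of fun p q => Φ (Matrix.of fun a b => M (p.1, a) (q.1, b)) p.2 q.2

/-- Action of `Φ ⊗ id_k` on block matrices. -/
def blockApplyRight {k : Type} (Φ : Matrix n n ℂ →ₗ[ℂ] Matrix m m ℂ)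
    (M : Matrix (n × k) (n × k) ℂ) : Matrix (m × k) (m × k) ℂ :=
  Matrix.of fun p q => Φ (Matrix.of fun a b => M (a, p.2) (b, q.2)) p.1 q.1

/-- Quantum channel: trace preserving and completely positive. -/
def IsQChannel (Φ : Matrix n n ℂ →ₗ[ℂ] Matrix m m ℂ) : Prop :=
  (∀ M : Matrix n n ℂ, (Φ M).trace = M.trace) ∧
  (∀ k : ℕ, 1 ≤ k → ∀ M : Matrix (Fin k × n) (Fin k × n) ℂ, M.PosSemidef →
    (blockApply Φ M).PosSemidef)

/-- `id_k ⊗ Φ` as a linear map. -/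
def blockApplyL (k : Type) (Φ : Matrix n n ℂ →ₗ[ℂ] Matrix m m ℂ) :
    Matrix (k × n) (k × n) ℂ →ₗ[ℂ] Matrix (k × m) (k × m) ℂ where
  toFun := blockApply Φ
  map_add' M N := by
    ext p q
    show Φ (Matrix.of fun a b => (M + N) (p.1, a) (q.1, b)) p.2 q.2 = _
    have h : (Matrix.of fun a b => (M + N) (p.1, a) (q.1, b)) =
        (Matrix.of fun a b => M (p.1, a) (q.1, b)) +
          (Matrix.of fun a b => N (p.1, a) (q.1, b)) := rfl
    rw [h, map_add]
    rfl
  map_smul' c M := by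
    ext p q
    show Φ (Matrix.of fun a b => (c • M) (p.1, a) (q.1, b)) p.2 q.2 = _
    have h : (Matrix.of fun a b => (c • M) (p.1, a) (q.1, b)) =
        c • (Matrix.of fun a b => M (p.1, a) (q.1, b)) := rfl
    rw [h, map_smul]
    rfl

/-- `Φ ⊗ id_k` as a linear map. -/
def blockApplyRightL (k : Type) (Φ : Matrix n n ℂ →ₗ[ℂ] Matrix m m ℂ) :
    Matrix (n × k) (n × k) ℂ →ₗ[ℂ] Matrix (m × k) (m × k) ℂ where
  toFun := blockApplyRight Φ
  map_add' M N := by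
    ext p q
    show Φ (Matrix.of fun a b => (M + N) (a, p.2) (b, q.2)) p.1 q.1 = _
    have h : (Matrix.of fun a b => (M + N) (a, p.2) (b, q.2)) =
        (Matrix.of fun a b => M (a, p.2) (b, q.2)) +
          (Matrix.of fun a b => N (a, p.2) (b, q.2)) := rfl
    rw [h, map_add]
    rfl
  map_smul' c M := by
    ext p q
    show Φ (Matrix.of fun a b => (c • M) (a, p.2) (b, q.2)) p.1 q.1 = _
    have h : (Matrix.of fun a b => (c • M) (a, p.2) (b, q.2)) =
        c • (Matrix.of fun a b => M (a, p.2) (b, q.2)) := rfl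
    rw [h, map_smul]
    rfl

/-- Tensor product of two channels (Kronecker product action). -/
def tensorChannel {n₁ m₁ n₂ m₂ : Type}
    (E₁ : Matrix n₁ n₁ ℂ →ₗ[ℂ] Matrix m₁ m₁ ℂ) (E₂ : Matrix n₂ n₂ ℂ →ₗ[ℂ] Matrix m₂ m₂ ℂ) :
    Matrix (n₁ × n₂) (n₁ × n₂) ℂ →ₗ[ℂ] Matrix (m₁ × m₂) (m₁ × m₂) ℂ :=
  (blockApplyRightL m₂ E₁).comp (blockApplyL n₁ E₂)

/-- Index type for `k`-fold tensor powers. -/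
def tpow (ι : Type) : ℕ → Type
  | 0 => PUnit
  | (k+1) => tpow ι k × ι

def tpowFintype (ι : Type) [Fintype ι] : ∀ k : ℕ, Fintype (tpow ι k)
  | 0 => inferInstanceAs (Fintype PUnit)
  | (k+1) => letI := tpowFintype ι k; inferInstanceAs (Fintype (tpow ι k × ι))

instance (ι : Type) [Fintype ι] (k : ℕ) : Fintype (tpow ι k) := tpowFintype ι k

def tpowDecEq (ι : Type) [DecidableEq ι] : ∀ k : ℕ, DecidableEq (tpow ι k)
  | 0 => inferInstanceAs (DecidableEq PUnit)
  | (k+1) => letI := tpowDecEq ι k; inferInstanceAs (DecidableEq (tpow ι k × ι))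

instance (ι : Type) [DecidableEq ι] (k : ℕ) : DecidableEq (tpow ι k) := tpowDecEq ι k

/-- `k`-fold Kronecker tensor power of a matrix. -/
def tpowMat (ρ : Matrix n n ℂ) : ∀ k : ℕ, Matrix (tpow n k) (tpow n k) ℂ
  | 0 => 1
  | (k+1) => (tpowMat ρ k) ⊗ₖ ρ

/-- `k`-fold tensor power of a channel. -/
def tpowChannel (Φ : Matrix n n ℂ →ₗ[ℂ] Matrix m m ℂ) :
    ∀ k : ℕ, Matrix (tpow n k) (tpow n k) ℂ →ₗ[ℂ] Matrix (tpow m k) (tpow m k) ℂ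
  | 0 => LinearMap.id
  | (k+1) => tensorChannel (tpowChannel Φ k) Φ

/-- Channel divergence induced by a divergence `𝔇` on states:
sup over `k ≥ 1` and input states `ν` on `ℂ^k ⊗ ℂ^d`. -/
def chDiv (𝔇 : ∀ (p : Type) [Fintype p] [DecidableEq p], Matrix p p ℂ → Matrix p p ℂ → EReal)
    (E F : Matrix n n ℂ →ₗ[ℂ] Matrix m m ℂ) : EReal :=
  ⨆ (k : ℕ) (_ : 1 ≤ k) (ν : Matrix (Fin k × n) (Fin k × n) ℂ) (_ : IsState ν),
    𝔇 (Fin k × m) (blockApply E ν) (blockApply F ν)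

/-- The geometric Rényi divergence as a divergence family. -/
def geomD (α : ℝ) : ∀ (p : Type) [Fintype p] [DecidableEq p],
    Matrix p p ℂ → Matrix p p ℂ → EReal :=
  fun _ _ _ => geomRenyi α

/-- The Umegaki relative entropy as a divergence family. -/
def relD : ∀ (p : Type) [Fintype p] [DecidableEq p],
    Matrix p p ℂ → Matrix p p ℂ → EReal :=
  fun _ _ _ => relEntropy

/-- The hypothesis testing divergence as a divergence family. -/
def dHD (ε : ℝ) : ∀ (p : Type) [Fintype p] [DecidableEq p],
    Matrix p p ℂ → Matrix p p ℂ → EReal :=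
  fun _ _ _ => dH ε

/-- Regularized channel relative entropy. -/
def regRelEntropy (E F : Matrix n n ℂ →ₗ[ℂ] Matrix m m ℂ) : EReal :=
  ⨆ (k : ℕ) (_ : 1 ≤ k),
    (((k : ℝ)⁻¹ : ℝ) : EReal) * chDiv relD (tpowChannel E k) (tpowChannel F k)

end QCD

namespace QCD

section Helpers

variable {n : Type} [Fintype n] [DecidableEq n]

lemma matFun_def (f : ℝ → ℝ) {A : Matrix n n ℂ} (hA : A.IsHermitian) :
    matFun f A = (hA.eigenvectorUnitary : Matrix n n ℂ) *
      Matrix.diagonal (fun i => (f (hA.eigenvalues i) : ℂ)) *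
      (star (hA.eigenvectorUnitary : Matrix n n ℂ)) := by
  unfold matFun
  rw [dif_pos hA]

lemma matFun_eq_cfc (f : ℝ → ℝ) {A : Matrix n n ℂ} (hA : A.IsHermitian) :
    matFun f A = cfc f A := by
  rw [matFun_def f hA, hA.cfc_eq, Matrix.IsHermitian.cfc, Unitary.conjStarAlgAut_apply]
  rfl

lemma matFun_mul (f g : ℝ → ℝ) {A : Matrix n n ℂ} (hA : A.IsHermitian) :
    matFun f A * matFun g A = matFun (fun x => f x * g x) A := by
  rw [matFun_def f hA, matFun_def g hA, matFun_def _ hA]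
  have h : star (hA.eigenvectorUnitary : Matrix n n ℂ) * (hA.eigenvectorUnitary : Matrix n n ℂ) = 1 :=
    Unitary.coe_star_mul_self hA.eigenvectorUnitary
  generalize (hA.eigenvectorUnitary : Matrix n n ℂ) = U at *
  calc _ = U * Matrix.diagonal (fun i => (f (hA.eigenvalues i) : ℂ)) * (star U * U) *
        Matrix.diagonal (fun i => (g (hA.eigenvalues i) : ℂ)) * star U := by
        simp only [mul_assoc]
    _ = _ := by
        rw [h, mul_one, mul_assoc U, Matrix.diagonal_mul_diagonal]
        simp

lemma matFun_conjTranspose (f : ℝ → ℝ) {A : Matrix n n ℂ} (hA : A.IsHermitian) :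
    (matFun f A).conjTranspose = matFun f A := by
  rw [matFun_def f hA]
  simp only [Matrix.conjTranspose_mul, Matrix.star_eq_conjTranspose,
    Matrix.conjTranspose_conjTranspose, Matrix.diagonal_conjTranspose, mul_assoc]
  congr 3
  ext i
  simp

lemma matFun_congr {f g : ℝ → ℝ} {A : Matrix n n ℂ} (hA : A.PosSemidef)
    (h : ∀ x, 0 ≤ x → f x = g x) : matFun f A = matFun g A := by
  rw [matFun_def f hA.1, matFun_def g hA.1]
  simp only [fun i => h _ (hA.eigenvalues_nonneg i)]

lemma matFun_id {A : Matrix n n ℂ} (hA : A.IsHermitian) : matFun (fun x => x) A = A := by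
  rw [matFun_eq_cfc _ hA]
  exact cfc_id' ℝ A hA

lemma rtr_mul_comm (A B : Matrix n n ℂ) : rtr (A * B) = rtr (B * A) := by
  unfold rtr; rw [Matrix.trace_mul_comm]

lemma rtr_nonneg {A : Matrix n n ℂ} (hA : A.PosSemidef) : 0 ≤ rtr A :=
  (Complex.nonneg_iff.mp hA.trace_nonneg).1

lemma rtr_sub (A B : Matrix n n ℂ) : rtr (A - B) = rtr A - rtr B := by
  simp [rtr, Matrix.trace_sub]

lemma rtr_add (A B : Matrix n n ℂ) : rtr (A + B) = rtr A + rtr B := by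
  simp [rtr, Matrix.trace_add]

lemma rtr_smul (r : ℝ) (A : Matrix n n ℂ) : rtr (r • A) = r * rtr A := by
  simp [rtr, Matrix.trace_smul]

lemma rtr_conjTranspose (A : Matrix n n ℂ) : rtr A.conjTranspose = rtr A := by
  simp [rtr, Matrix.trace_conjTranspose]

/-- Cauchy–Schwarz for the Hilbert–Schmidt inner product. -/
lemma rtr_cs (A B : Matrix n n ℂ) :
    rtr (A.conjTranspose * B) ^ 2 ≤ rtr (A.conjTranspose * A) * rtr (B.conjTranspose * B) := by
  have key : ∀ t : ℝ, 0 ≤ rtr (B.conjTranspose * B) * (t * t) +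
      (-2 * rtr (A.conjTranspose * B)) * t + rtr (A.conjTranspose * A) := by
    intro t
    have h := rtr_nonneg (Matrix.posSemidef_conjTranspose_mul_self (A - t • B))
    have h2 : rtr (B.conjTranspose * A) = rtr (A.conjTranspose * B) := by
      rw [← rtr_conjTranspose (A.conjTranspose * B)]; simp
    simp only [Matrix.conjTranspose_sub, Matrix.conjTranspose_smul, star_trivial, sub_mul, mul_sub,
      rtr_sub, smul_mul_assoc, mul_smul_comm, rtr_smul, h2] at h
    linarith
  have := discrim_le_zero key
  unfold discrim at this
  nlinarith

lemma rtr_mul_le {P Q X : Matrix n n ℂ} (h : (Q - P).PosSemidef) :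
    rtr (X.conjTranspose * P * X) ≤ rtr (X.conjTranspose * Q * X) := by
  have := rtr_nonneg (h.conjTranspose_mul_mul_same X)
  rw [mul_sub, sub_mul, rtr_sub] at this
  linarith

lemma one_sub_posSemidef {P : Matrix n n ℂ} (h1 : P.conjTranspose = P) (h2 : P * P = P) :
    (1 - P).PosSemidef := by
  have h := Matrix.posSemidef_conjTranspose_mul_self (1 - P)
  have : (1 - P).conjTranspose * (1 - P) = 1 - P := by
    simp [h1, sub_mul, mul_sub, h2]
  rwa [this] at h

/-- Polar-type decomposition. -/
lemma exists_polar (M : Matrix n n ℂ) : ∃ W : Matrix n n ℂ,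
    W.conjTranspose * M = msqrt (M.conjTranspose * M) ∧
    (1 - W.conjTranspose * W).PosSemidef ∧ (1 - W * W.conjTranspose).PosSemidef := by
  have hP : (M.conjTranspose * M).PosSemidef := Matrix.posSemidef_conjTranspose_mul_self M
  set H := M.conjTranspose * M with hH
  set f : ℝ → ℝ := fun x => (Real.sqrt x)⁻¹ with hf
  have hfx : ∀ x, 0 ≤ x → f x * x = Real.sqrt x := by
    intro x hx
    rcases hx.eq_or_lt with rfl | hx'
    · simp
    · have := Real.sqrt_pos.mpr hx'
      simp only [hf]
      field_simp
      rw [Real.sq_sqrt hx]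
  have hD := matFun_conjTranspose f hP.1
  have hDH : matFun f H * H = msqrt H := by
    conv_lhs => rw [← matFun_id hP.1]
    rw [matFun_id hP.1]
    nth_rewrite 2 [← matFun_id hP.1]
    rw [matFun_mul _ _ hP.1]
    exact matFun_congr hP hfx
  have hWW : (M * matFun f H).conjTranspose * (M * matFun f H) =
      matFun (fun x => Real.sqrt x * f x) H := by
    rw [Matrix.conjTranspose_mul, hD, mul_assoc, ← mul_assoc _ M, ← hH, ← mul_assoc, hDH, msqrt,
      matFun_mul _ _ hP.1]
  have hWWW : (M * matFun f H) * ((M * matFun f H).conjTranspose * (M * matFun f H)) =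
      M * matFun f H := by
    rw [hWW, mul_assoc, matFun_mul _ _ hP.1]
    congr 1
    apply matFun_congr hP
    intro x hx
    rcases hx.eq_or_lt with rfl | hx'
    · simp [hf]
    · have := Real.sqrt_pos.mpr hx'
      simp only [hf]
      field_simp
  refine ⟨M * matFun f H, ?_, ?_, ?_⟩
  · rw [Matrix.conjTranspose_mul, hD, mul_assoc, ← hH, hDH]
  · apply one_sub_posSemidef
    · simp
    · rw [mul_assoc, hWWW]
  · apply one_sub_posSemidef
    · simp
    · rw [← mul_assoc, mul_assoc _ _ (M * matFun f H), hWWW]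

lemma msqrt_mul_self {A : Matrix n n ℂ} (hA : A.PosSemidef) : msqrt A * msqrt A = A := by
  unfold msqrt
  rw [matFun_mul _ _ hA.1, matFun_congr (g := fun x => x) hA, matFun_id hA.1]
  intro x hx
  exact Real.mul_self_sqrt hx

/-- `F(ρ,σ) ≤ Tr √ρ √σ`. -/
lemma fidelity_le {ρ σ : Matrix n n ℂ} (hρ : IsState ρ) (hσ : IsState σ) :
    fidelity ρ σ ≤ rtr (msqrt ρ * msqrt σ) := by
  set q : ℝ → ℝ := fun x => Real.sqrt (Real.sqrt x) with hq
  have hqq : ∀ {A : Matrix n n ℂ}, A.PosSemidef → matFun q A * matFun q A = msqrt A := by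
    intro A hA
    unfold msqrt
    rw [matFun_mul _ _ hA.1]
    apply matFun_congr hA
    intro x hx
    exact Real.mul_self_sqrt (Real.sqrt_nonneg x)
  have hR := matFun_conjTranspose Real.sqrt hρ.1.1
  have hS := matFun_conjTranspose Real.sqrt hσ.1.1
  have hr := matFun_conjTranspose q hρ.1.1
  have hs := matFun_conjTranspose q hσ.1.1
  have hrr := hqq hρ.1
  have hss := hqq hσ.1
  have hRR := msqrt_mul_self hρ.1
  have hSS := msqrt_mul_self hσ.1
  have hM : msqrt σ * ρ * msqrt σ = (msqrt ρ * msqrt σ).conjTranspose * (msqrt ρ * msqrt σ) := by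
    rw [Matrix.conjTranspose_mul]
    change _ = (matFun _ _).conjTranspose * (matFun _ _).conjTranspose * _
    rw [hR, hS]
    change _ = msqrt σ * msqrt ρ * (msqrt ρ * msqrt σ)
    rw [mul_assoc, mul_assoc, ← mul_assoc (msqrt ρ) (msqrt ρ), hRR]
  unfold fidelity
  rw [hM]
  obtain ⟨W, hW1, hW2, hW3⟩ := exists_polar (msqrt ρ * msqrt σ)
  rw [← hW1]
  change (matFun _ _).conjTranspose = msqrt _ at hR
  change (matFun _ _).conjTranspose = msqrt _ at hS
  change (msqrt _).conjTranspose = _ at hR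
  change (msqrt _).conjTranspose = _ at hS
  generalize msqrt ρ = R at *
  generalize msqrt σ = S at *
  generalize matFun q ρ = r at *
  generalize matFun q σ = s at *
  have e1 : rtr (W.conjTranspose * (R * S)) = rtr ((r * W * s).conjTranspose * (r * s)) := by
    simp only [Matrix.conjTranspose_mul, hr, hs]
    rw [← hrr, ← hss]
    calc _ = rtr ((W.conjTranspose * r * r * s) * s) := by simp only [mul_assoc]
      _ = rtr (s * (W.conjTranspose * r * r * s)) := rtr_mul_comm _ _
      _ = _ := by simp only [mul_assoc]
  have e2 : rtr ((r * s).conjTranspose * (r * s)) = rtr (R * S) := by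
    simp only [Matrix.conjTranspose_mul, hr, hs]
    rw [← hrr, ← hss]
    calc _ = rtr (s * (r * r * s)) := by simp only [mul_assoc]
      _ = rtr ((r * r * s) * s) := rtr_mul_comm _ _
      _ = _ := by simp only [mul_assoc]
  have e3 : rtr ((r * W * s).conjTranspose * (r * W * s)) =
      rtr ((W * S).conjTranspose * (R * W)) := by
    simp only [Matrix.conjTranspose_mul, hr, hs, hS]
    rw [← hrr, ← hss]
    calc _ = rtr (s * (W.conjTranspose * r * r * W * s)) := by simp only [mul_assoc]
      _ = rtr ((W.conjTranspose * r * r * W * s) * s) := rtr_mul_comm _ _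
      _ = rtr ((W.conjTranspose * r * r * W) * (s * s)) := by simp only [mul_assoc]
      _ = rtr ((s * s) * (W.conjTranspose * r * r * W)) := rtr_mul_comm _ _
      _ = _ := by simp only [mul_assoc]
  have b1 : rtr ((W * S).conjTranspose * (W * S)) ≤ 1 := by
    have h := rtr_mul_le (X := S) hW2
    rw [mul_one, hS, hSS] at h
    have h1 : rtr σ = 1 := by simp [rtr, hσ.2]
    rw [h1] at h
    simpa only [Matrix.conjTranspose_mul, hS, mul_assoc] using h
  have b2 : rtr ((R * W).conjTranspose * (R * W)) ≤ 1 := by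
    have h := rtr_mul_le (X := R) hW3
    rw [mul_one, hR, hRR] at h
    have h1 : rtr ρ = 1 := by simp [rtr, hρ.2]
    rw [h1] at h
    rw [rtr_mul_comm]
    simpa only [Matrix.conjTranspose_mul, hR, mul_assoc] using h
  have p1 := rtr_nonneg (Matrix.posSemidef_conjTranspose_mul_self (R * W))
  have p2 := rtr_nonneg (Matrix.posSemidef_conjTranspose_mul_self (r * s))
  have c1 := rtr_cs (W * S) (R * W)
  have c2 := rtr_cs (r * W * s) (r * s)
  rw [e3, e2] at c2
  rw [e2] at p2
  rw [e1]
  have : rtr ((W * S).conjTranspose * (R * W)) ≤ 1 := by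
    have : rtr ((W * S).conjTranspose * (R * W)) ^ 2 ≤ 1 := by
      refine c1.trans ?_
      nlinarith
    nlinarith
  nlinarith

lemma matFun_one {A : Matrix n n ℂ} (hA : A.IsHermitian) : matFun (fun _ => 1) A = 1 := by
  rw [matFun_def _ hA]
  simp

/-- Nussbaum–Szkoła representation. -/
lemma exists_ns {ρ σ : Matrix n n ℂ} (hρ : ρ.PosSemidef) (hσ : σ.PosSemidef) :
    ∃ (p q : n → ℝ) (w : n → n → ℝ), (∀ i, 0 ≤ p i) ∧ (∀ i, 0 ≤ q i) ∧ (∀ i j, 0 ≤ w i j) ∧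
      ∀ f g : ℝ → ℝ, rtr (matFun f ρ * matFun g σ) = ∑ i, ∑ j, f (p i) * g (q j) * w i j := by
  refine ⟨hρ.1.eigenvalues, hσ.1.eigenvalues, fun i j => Complex.normSq
    ((star (hρ.1.eigenvectorUnitary : Matrix n n ℂ) * (hσ.1.eigenvectorUnitary : Matrix n n ℂ)) i j),
    hρ.eigenvalues_nonneg, hσ.eigenvalues_nonneg, fun i j => Complex.normSq_nonneg _, ?_⟩
  intro f g
  rw [matFun_def f hρ.1, matFun_def g hσ.1]
  generalize (hρ.1.eigenvectorUnitary : Matrix n n ℂ) = U at *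
  generalize (hσ.1.eigenvectorUnitary : Matrix n n ℂ) = V at *
  set K := star U * V with hK
  have hK' : star V * U = star K := by simp [hK]
  have : rtr (U * Matrix.diagonal (fun i => (f (hρ.1.eigenvalues i) : ℂ)) * star U *
      (V * Matrix.diagonal (fun i => (g (hσ.1.eigenvalues i) : ℂ)) * star V)) =
      rtr ((Matrix.diagonal (fun i => (f (hρ.1.eigenvalues i) : ℂ)) * K) *
        (Matrix.diagonal (fun i => (g (hσ.1.eigenvalues i) : ℂ)) * star K)) := by
    rw [← hK', hK]
    simp only [mul_assoc]
    rw [rtr_mul_comm U]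
    simp only [mul_assoc]
  rw [this]
  simp only [rtr, Matrix.trace, Matrix.diag_apply, Matrix.mul_apply (M := Matrix.diagonal _ * K),
    Matrix.diagonal_mul, Complex.re_sum, Matrix.star_apply]
  refine Finset.sum_congr rfl fun i _ => Finset.sum_congr rfl fun j _ => ?_
  have : (f (hρ.1.eigenvalues i) : ℂ) * K i j * ((g (hσ.1.eigenvalues j) : ℂ) * star (K i j)) =
      ((f (hρ.1.eigenvalues i) * g (hσ.1.eigenvalues j) * Complex.normSq (K i j) : ℝ) : ℂ) := by
    push_cast
    rw [← Complex.mul_conj]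
    simp only [RCLike.star_def]
    ring
  rw [this, Complex.ofReal_re]

/-- power on the support -/
def spow (t x : ℝ) : ℝ := if x = 0 then 0 else x ^ t

lemma mpow_eq (A : Matrix n n ℂ) (t : ℝ) : mpow A t = matFun (spow t) A := by
  unfold mpow
  congr 1

lemma spow_nonneg (t : ℝ) {x : ℝ} (hx : 0 ≤ x) : 0 ≤ spow t x := by
  unfold spow
  split_ifs
  · exact le_rfl
  · positivity

lemma spow_half {x : ℝ} (t : ℝ) (hx : 0 ≤ x) :
    Real.sqrt (spow t x) * Real.sqrt (spow (1 - t) x) = Real.sqrt x := by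
  rw [← Real.sqrt_mul (spow_nonneg t hx)]
  congr 1
  unfold spow
  split_ifs with h
  · simp [h]
  · rw [← Real.rpow_add (lt_of_le_of_ne hx (Ne.symm h))]; simp

lemma spow_young {x y t : ℝ} (hx : 0 ≤ x) (hy : 0 ≤ y) (h0 : 0 ≤ t) (h1 : t < 1) :
    spow (1 - t) x * spow t y ≤ (1 - t) * x + t * y := by
  have hr : 0 ≤ (1 - t) * x + t * y := by
    have := sub_pos.mpr h1
    positivity
  unfold spow
  split_ifs
  · simpa using hr
  · simpa using hr
  · simpa using hr
  · exact Real.geom_mean_le_arith_mean2_weighted (by linarith) h0 hx hy (by ring)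

/-- `(Tr √ρ√σ)² ≤ Tr ρ^α σ^(1-α)`. -/
lemma half_sq_le {ρ σ : Matrix n n ℂ} (hρ : IsState ρ) (hσ : IsState σ) {α : ℝ}
    (h0 : 0 ≤ α) (h1 : α < 1) :
    rtr (msqrt ρ * msqrt σ) ^ 2 ≤ rtr (mpow ρ α * mpow σ (1 - α)) := by
  obtain ⟨p, q, w, hp, hq, hw, H⟩ := exists_ns hρ.1 hσ.1
  have hsp : rtr ρ = ∑ i, ∑ j, p i * w i j := by
    have := H (fun x => x) (fun _ => 1)
    rw [matFun_id hρ.1.1, matFun_one hσ.1.1] at this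
    simpa using this
  have hsq : rtr σ = ∑ i, ∑ j, q j * w i j := by
    have := H (fun _ => 1) (fun x => x)
    rw [matFun_id hσ.1.1, matFun_one hρ.1.1] at this
    simpa using this
  have hρ1 : rtr ρ = 1 := by simp [rtr, hρ.2]
  have hσ1 : rtr σ = 1 := by simp [rtr, hσ.2]
  rw [hρ1] at hsp
  rw [hσ1] at hsq
  rw [mpow_eq, mpow_eq, H, msqrt, msqrt, H]
  set Y := ∑ i, ∑ j, spow (1 - α) (p i) * spow α (q j) * w i j with hY
  have hY1 : Y ≤ 1 := by
    calc Y ≤ ∑ i, ∑ j, ((1 - α) * (p i * w i j) + α * (q j * w i j)) := by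
          refine Finset.sum_le_sum fun i _ => Finset.sum_le_sum fun j _ => ?_
          have := mul_le_mul_of_nonneg_right (spow_young (hp i) (hq j) h0 h1) (hw i j)
          linarith
      _ = 1 := by
          have e : ∑ i, ∑ j, ((1 - α) * (p i * w i j) + α * (q j * w i j)) =
              (1 - α) * (∑ i, ∑ j, p i * w i j) + α * ∑ i, ∑ j, q j * w i j := by
            simp only [Finset.sum_add_distrib, Finset.mul_sum]
          rw [e, ← hsp, ← hsq]
          ring
  have hX0 : 0 ≤ ∑ i, ∑ j, spow α (p i) * spow (1 - α) (q j) * w i j :=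
    Finset.sum_nonneg fun i _ => Finset.sum_nonneg fun j _ =>
      mul_nonneg (mul_nonneg (spow_nonneg _ (hp i)) (spow_nonneg _ (hq j))) (hw i j)
  have cs : (∑ i, ∑ j, Real.sqrt (p i) * Real.sqrt (q j) * w i j) ^ 2 ≤
      (∑ i, ∑ j, spow α (p i) * spow (1 - α) (q j) * w i j) * Y := by
    rw [hY]
    simp only [← Finset.sum_product']
    apply Finset.sum_sq_le_sum_mul_sum_of_sq_le_mul
    · intro x _
      exact mul_nonneg (mul_nonneg (spow_nonneg _ (hp _)) (spow_nonneg _ (hq _))) (hw _ _)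
    · intro x _
      exact mul_nonneg (mul_nonneg (spow_nonneg _ (hp _)) (spow_nonneg _ (hq _))) (hw _ _)
    · intro x _
      apply le_of_eq
      rw [← spow_half α (hp x.1), ← spow_half α (hq x.2)]
      have a1 := Real.mul_self_sqrt (spow_nonneg α (hp x.1))
      have a2 := Real.mul_self_sqrt (spow_nonneg (1 - α) (hp x.1))
      have a3 := Real.mul_self_sqrt (spow_nonneg α (hq x.2))
      have a4 := Real.mul_self_sqrt (spow_nonneg (1 - α) (hq x.2))
      generalize Real.sqrt (spow α (p x.1)) = y1 at *
      generalize Real.sqrt (spow (1 - α) (p x.1)) = y2 at *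
      generalize Real.sqrt (spow α (q x.2)) = y3 at *
      generalize Real.sqrt (spow (1 - α) (q x.2)) = y4 at *
      rw [← a1, ← a2, ← a3, ← a4]
      ring
  refine cs.trans ?_
  nlinarith

lemma mpow_smul {A : Matrix n n ℂ} (hA : A.PosSemidef) {c : ℝ} (hc : 0 < c) (t : ℝ) :
    mpow (c • A) t = (c ^ t) • mpow A t := by
  have hcA : (c • A).PosSemidef := hA.smul hc.le
  rw [mpow_eq, mpow_eq, matFun_eq_cfc _ hcA.1, matFun_eq_cfc _ hA.1]
  have hfin : ∀ (B : Matrix n n ℂ) (f : ℝ → ℝ), ContinuousOn f (spectrum ℝ B) := by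
    intro B f
    exact (Matrix.finite_real_spectrum (A := B)).continuousOn f
  refine (cfc_comp_const_mul c (spow t) A
    ((((Matrix.finite_real_spectrum (A := A)).image _)).continuousOn _)
    (show IsSelfAdjoint A from hA.1)).symm.trans ?_
  refine Eq.trans ?_ (cfc_smul (c ^ t) (spow t) A (hfin _ _))
  rw [← matFun_eq_cfc _ hA.1, ← matFun_eq_cfc _ hA.1]
  apply matFun_congr hA
  intro x hx
  unfold spow
  by_cases h : x = 0
  · simp [h]
  · simp [h, hc.ne', Real.mul_rpow hc.le hx]

section mono
open scoped MatrixOrder Matrix.Norms.L2Operator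

lemma mpow_eq_rpow {A : Matrix n n ℂ} (hA : A.PosSemidef) {t : ℝ} (ht : 0 < t) :
    mpow A t = A ^ t := by
  rw [CFC.rpow_eq_cfc_real (Matrix.nonneg_iff_posSemidef.mpr hA), mpow_eq, ← matFun_eq_cfc _ hA.1]
  apply matFun_congr hA
  intro x _
  unfold spow
  split_ifs with h
  · rw [h, Real.zero_rpow ht.ne']
  · rfl

lemma mpow_mono {A B : Matrix n n ℂ} (hA : A.PosSemidef) (h : (B - A).PosSemidef) {t : ℝ}
    (ht : 0 < t) (ht1 : t ≤ 1) : (mpow B t - mpow A t).PosSemidef := by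
  have hB : B.PosSemidef := by simpa using h.add hA
  rw [mpow_eq_rpow hA ht, mpow_eq_rpow hB ht]
  exact Matrix.le_iff.mp (CFC.rpow_le_rpow ⟨ht.le, ht1⟩ (Matrix.le_iff.mpr h))

end mono

lemma main_bound {ρ σ τ : Matrix n n ℂ} (hρ : IsState ρ) (hσ : IsState σ) (hτ : IsState τ)
    {ε α l : ℝ} (hε0 : 0 < ε) (hε1 : ε < 1) (h0 : 0 ≤ α) (h1 : α < 1)
    (hd : sineDist ρ τ ≤ ε) (hl : loewnerLE τ ((((2:ℝ) ^ l : ℝ) : ℂ) • σ)) :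
    (1 - ε) ^ 2 ≤ ((2:ℝ) ^ l) ^ (1 - α) * rtr (mpow ρ α * mpow σ (1 - α)) := by
  have hF : 1 - ε ^ 2 ≤ fidelity ρ τ := by
    unfold sineDist at hd
    have := (Real.sqrt_le_left hε0.le).mp hd
    linarith
  have h2 := fidelity_le hρ hτ
  have h3 := half_sq_le hρ hτ h0 h1
  have hc : (0:ℝ) < 2 ^ l := by positivity
  have hl' : ((2:ℝ) ^ l • σ - τ).PosSemidef := by
    have e : (2:ℝ) ^ l • σ = (((2:ℝ) ^ l : ℝ) : ℂ) • σ := by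
      ext i j; simp
    rw [e]; exact hl
  have hm := mpow_mono hτ.1 hl' (t := 1 - α) (by linarith) (by linarith)
  rw [mpow_smul hσ.1 hc] at hm
  have hX : ∃ X : Matrix n n ℂ, X * X.conjTranspose = mpow ρ α := by
    refine ⟨matFun (fun x => Real.sqrt (spow α x)) ρ, ?_⟩
    rw [matFun_conjTranspose _ hρ.1.1, matFun_mul _ _ hρ.1.1, mpow_eq]
    apply matFun_congr hρ.1
    intro x hx
    exact Real.mul_self_sqrt (spow_nonneg _ hx)
  obtain ⟨X, hX⟩ := hX
  have key := rtr_mul_le (X := X) hm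
  have e : ∀ P : Matrix n n ℂ, rtr (X.conjTranspose * P * X) = rtr (mpow ρ α * P) := by
    intro P
    rw [rtr_mul_comm, ← hX, mul_assoc]
  rw [e, e, mul_smul_comm, rtr_smul] at key
  refine le_trans ?_ key
  refine le_trans ?_ h3
  have : 1 - ε ≤ rtr (msqrt ρ * msqrt τ) := by nlinarith
  exact pow_le_pow_left₀ (by linarith) this 2

end Helpers

/-- Smoothed max-relative entropy lower bounded by the Petz–Rényi divergence. -/
theorem petzRenyi_le_dMaxSmooth {d : ℕ} (ρ σ : Matrix (Fin d) (Fin d) ℂ)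
    (hρ : IsState ρ) (hσ : IsState σ) (ε : ℝ) (hε : 0 < ε ∧ ε < 1)
    (α : ℝ) (hα : 0 ≤ α ∧ α < 1) :
    petzRenyi α ρ σ + ((2 / (α - 1) * Real.logb 2 (1 / (1 - ε)) : ℝ) : EReal) ≤
      dMaxSmooth ε ρ σ := by
  obtain ⟨h0, h1⟩ := hα
  obtain ⟨e0, e1⟩ := hε
  unfold dMaxSmooth
  refine le_iInf fun τ => le_iInf fun hτ => ?_
  unfold dMax
  refine le_sInf ?_
  rintro _ ⟨l, rfl, hl⟩
  have hb := main_bound hρ hσ hτ.1 e0 e1 h0 h1 hτ.2 hl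
  have hcond : ¬ (1 < α ∧ ¬ SuppLE ρ σ) := fun h => absurd h.1 (by linarith)
  unfold petzRenyi
  rw [if_neg hcond]
  set Q := rtr (mpow ρ α * mpow σ (1 - α)) with hQ
  have he : 0 < 1 - ε := by linarith
  have hc : (0:ℝ) < ((2:ℝ) ^ l) ^ (1 - α) := by positivity
  have hQ0 : 0 < Q := by
    by_contra hn
    have : ((2:ℝ) ^ l) ^ (1 - α) * Q ≤ 0 := mul_nonpos_of_nonneg_of_nonpos hc.le (not_lt.mp hn)
    have : 0 < (1 - ε) ^ 2 := by positivity
    linarith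
  unfold elog
  rw [if_neg (not_le.mpr hQ0), ← EReal.coe_mul, ← EReal.coe_add, EReal.coe_le_coe_iff]
  have hlog := Real.logb_le_logb_of_le (b := 2) (by norm_num) (by positivity) hb
  rw [Real.logb_mul hc.ne' hQ0.ne', Real.logb_pow, ← Real.rpow_mul (by norm_num),
    Real.logb_rpow (by norm_num) (by norm_num)] at hlog
  rw [one_div, Real.logb_inv]
  have ha : 0 < 1 - α := by linarith
  have e : (α - 1)⁻¹ * Real.logb 2 Q + 2 / (α - 1) * -Real.logb 2 (1 - ε) =
      (2 * Real.logb 2 (1 - ε) - Real.logb 2 Q) / (1 - α) := by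
    have : α - 1 ≠ 0 := by linarith
    field_simp
    ring
  rw [e, div_le_iff₀ ha]
  push_cast at hlog
  linarith

end QCD
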